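/- The set α = {(1/6,1/4), (5/6,1/4), (1/6,11/12), (5/6,11/12)} of the four centroids a(1),a(2),a(3),a(4) is an optimal set of four-means for P with quantization error V₄ = 7/288. -/

import Mathlib

/-!
Let `m` be the mean of `P` and `φ` the squared distance to the nearest of at most four centres. Then
`φ - ‖· - m‖²` is a minimum of affine functions, hence concave. For a concave `g`, averaging
`g ((1 - r) v_i + r x) ≥ (1 - r) g (v_i) + r g x` against a self-similar measure and solving for the
integral gives `∑ w_i g (v_i) ≤ ∫ g`, where the `v_i` are the fixed points of the maps; one more
application of self-similarity gives the same with the points `S_i v_j` weighted by `w_i w_j`.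
Since `∫ ‖x - m‖²` is known, the lower bound on the error of four centres becomes one for sixteen
weighted points, a `4 × 4` grid, and at this level nothing is lost.

The discrete problem is solved by weak linear programming duality: it suffices to put prices on the
grid points such that a cluster never costs more, in total price, than its distortion plus a fixed
fee. Both coordinates of the distortion of a cluster are bounded below through its row counts alone,
because `k` distinct integers are least spread when consecutive, which leaves finitely many
inequalities between integers.

The centroids `S_i m` attain the bound, as `S_i` scales the variance of `P` by `1/9`.
-/

open MeasureTheory ProbabilityTheory
open scoped ENNReal

noncomputable section

abbrev E2 : Type := EuclideanSpace ℝ (Fin 2)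

/-- The point (a,b) of the Euclidean plane. -/
def pt (a b : ℝ) : E2 := (WithLp.equiv 2 (Fin 2 → ℝ)).symm ![a, b]

/-- The four generating similarities S₁,…,S₄ (indexed 0,…,3) of the Sierpiński carpet. -/
def S : Fin 4 → E2 → E2
  | 0 => fun x => pt (x 0 / 3) (x 1 / 3)
  | 1 => fun x => pt (x 0 / 3 + 2/3) (x 1 / 3)
  | 2 => fun x => pt (x 0 / 3) (x 1 / 3 + 2/3)
  | 3 => fun x => pt (x 0 / 3 + 2/3) (x 1 / 3 + 2/3)

/-- The self-affinity equation P = (1/8)P∘S₁⁻¹ + (1/8)P∘S₂⁻¹ + (3/8)P∘S₃⁻¹ + (3/8)P∘S₄⁻¹. -/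
def carpetEq (P : Measure E2) : Prop :=
  P = (1/8 : ℝ≥0∞) • P.map (S 0) + (1/8 : ℝ≥0∞) • P.map (S 1)
    + (3/8 : ℝ≥0∞) • P.map (S 2) + (3/8 : ℝ≥0∞) • P.map (S 3)

/-- The unit square [0,1]². -/
def unitSq : Set E2 := {x | ∀ i, x i ∈ Set.Icc (0:ℝ) 1}

/-- S_ω = S_{ω₁} ∘ ⋯ ∘ S_{ω_k} for a word ω. -/
def Sw (w : List (Fin 4)) : E2 → E2 := fun x => w.foldr S x

/-- The basic square J_ω = S_ω([0,1]²). -/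
def Jw (w : List (Fin 4)) : Set E2 := Sw w '' unitSq

/-- The basic square J_i of the first level. -/
def Jset (i : Fin 4) : Set E2 := S i '' unitSq

/-- The mass centroid (conditional expectation) of P on a set A. -/
def ctr (P : Measure E2) (A : Set E2) : E2 := (P A).toReal⁻¹ • ∫ x in A, x ∂P

/-- E(ω) : distortion error on J_ω about its centroid a(ω) = S_ω(1/2,3/4). -/
def Err (P : Measure E2) (w : List (Fin 4)) : ℝ :=
  ∫ x in Jw w, ‖x - Sw w (pt (1/2) (3/4))‖^2 ∂P

/-- E(ωi, ωj) : distortion error on J_{ωi} ∪ J_{ωj} about its centroid. -/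
def Epair (P : Measure E2) (w : List (Fin 4)) (i j : Fin 4) : ℝ :=
  ∫ x in (Jw (w ++ [i]) ∪ Jw (w ++ [j])),
    ‖x - ctr P (Jw (w ++ [i]) ∪ Jw (w ++ [j]))‖^2 ∂P

open scoped NNReal

section Stationary

variable {ι X : Type*} [Fintype ι] [MeasurableSpace X] {w : ι → ℝ≥0} {f : ι → X → X}
  {μ : Measure X}

/-- A stationary measure of the iterated function system `f` with weights `w`, in the sense of
Hutchinson: `μ = ∑ i, w i • f i_* μ`. The total weight is forced to be `1` when `μ` is a probability
measure. -/
def IsSelfSimilar (w : ι → ℝ≥0) (f : ι → X → X) (μ : Measure X) : Prop :=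
  μ = ∑ i, w i • μ.map (f i)

namespace IsSelfSimilar

theorem sum_eq_one [IsProbabilityMeasure μ] (hμ : IsSelfSimilar w f μ)
    (hf : ∀ i, Measurable (f i)) : ∑ i, w i = 1 := by
  have h := congrArg (fun ν : Measure X => ν Set.univ) hμ
  simp only [measure_univ, Measure.finsetSum_apply, Measure.smul_apply,
    Measure.map_apply (hf _) MeasurableSet.univ, Set.preimage_univ, ENNReal.smul_def, smul_eq_mul,
    mul_one] at h
  exact_mod_cast h.symm

theorem integral_eq_sum {G : Type*} [NormedAddCommGroup G] [NormedSpace ℝ G]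
    (hμ : IsSelfSimilar w f μ) (hf : ∀ i, Measurable (f i)) {g : X → G} (hg : StronglyMeasurable g)
    (hint : Integrable g μ) : ∫ x, g x ∂μ = ∑ i, w i • ∫ x, g (f i x) ∂μ := by
  have hint' : ∀ i ∈ Finset.univ, Integrable g (w i • μ.map (f i)) :=
    integrable_finsetSum_measure.1 (hμ ▸ hint)
  calc ∫ x, g x ∂μ = ∫ x, g x ∂(∑ i, w i • μ.map (f i)) := by rw [← hμ]
    _ = ∑ i, w i • ∫ x, g (f i x) ∂μ := by
      rw [integral_finsetSum_measure hint']
      refine Finset.sum_congr rfl fun i _ => ?_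
      rw [integral_smul_nnreal_measure,
        integral_map (hf i).aemeasurable hg.aestronglyMeasurable]

-- Integrating `arctan ∘ d` instead of `d` makes any moment assumption unnecessary.
theorem ae_eq_zero_of_comp_le [IsProbabilityMeasure μ] (hμ : IsSelfSimilar w f μ)
    (hf : ∀ i, Measurable (f i)) {d : X → ℝ} (hd : Measurable d) (hd₀ : ∀ x, 0 ≤ d x) {r : ℝ}
    (hr : r < 1) (hdf : ∀ i x, d (f i x) ≤ r * d x) : d =ᵐ[μ] 0 := by
  have integrable_arctan {u : X → ℝ} (hu : Measurable u) :
      Integrable (fun x => Real.arctan (u x)) μ :=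
    .of_bound (Real.measurable_arctan.comp hu).aestronglyMeasurable (Real.pi / 2)
      (.of_forall fun x => abs_le.2
        ⟨(Real.neg_pi_div_two_lt_arctan _).le, (Real.arctan_lt_pi_div_two _).le⟩)
  have hrd := integrable_arctan (hd.const_mul r)
  have contraction_le : (fun x => Real.arctan (r * d x)) ≤ᵐ[μ] fun x => Real.arctan (d x) :=
    .of_forall fun x => Real.arctan_strictMono.monotone <|
      mul_le_of_le_one_left (hd₀ x) hr.le
  have le_contraction : ∫ x, Real.arctan (d x) ∂μ ≤ ∫ x, Real.arctan (r * d x) ∂μ :=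
    calc ∫ x, Real.arctan (d x) ∂μ = ∑ i, w i • ∫ x, Real.arctan (d (f i x)) ∂μ :=
          hμ.integral_eq_sum hf (Real.measurable_arctan.comp hd).stronglyMeasurable
            (integrable_arctan hd)
      _ ≤ ∑ i, w i • ∫ x, Real.arctan (r * d x) ∂μ := by
          gcongr with i _
          exacts [integrable_arctan (hd.comp (hf i)), fun x =>
            Real.arctan_strictMono.monotone (hdf i x)]
      _ = ∫ x, Real.arctan (r * d x) ∂μ := by
          rw [← Finset.sum_smul, hμ.sum_eq_one hf, one_smul]
  have arctan_eq := (integral_eq_iff_of_ae_le hrd (integrable_arctan hd) contraction_le).1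
    (le_antisymm (integral_mono_ae hrd (integrable_arctan hd) contraction_le) le_contraction)
  filter_upwards [arctan_eq] with x hx
  have hx : r * d x = d x := Real.arctan_injective hx
  exact (mul_eq_zero.1 (by linarith : (1 - r) * d x = 0)).resolve_left (sub_pos.2 hr).ne'

end IsSelfSimilar

end Stationary

theorem sum_nnreal_smul_smul_add_smul {ι F : Type*} [Fintype ι] [AddCommGroup F] [Module ℝ F]
    {w : ι → ℝ≥0} (hw : ∑ i, w i = 1) (a b : ℝ) (u : ι → F) (c : F) :
    ∑ i, w i • (a • u i + b • c) = a • ∑ i, w i • u i + b • c := by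
  simp only [smul_add, Finset.sum_add_distrib, ← Finset.sum_smul, hw, one_smul, Finset.smul_sum,
    smul_comm a]

theorem integral_norm_const_add_smul_sq {Ω E : Type*} [MeasurableSpace Ω] {μ : Measure Ω}
    [IsProbabilityMeasure μ] [NormedAddCommGroup E] [InnerProductSpace ℝ E] [CompleteSpace E]
    {Y : Ω → E} (hY : Integrable Y μ) (hY₂ : Integrable (fun ω => ‖Y ω‖ ^ 2) μ)
    (centered : ∫ ω, Y ω ∂μ = 0) (u : E) (r : ℝ) :
    ∫ ω, ‖u + r • Y ω‖ ^ 2 ∂μ = ‖u‖ ^ 2 + r ^ 2 * ∫ ω, ‖Y ω‖ ^ 2 ∂μ := by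
  have hinner : Integrable (fun ω => 2 * r * inner ℝ u (Y ω)) μ := (hY.const_inner u).const_mul _
  calc ∫ ω, ‖u + r • Y ω‖ ^ 2 ∂μ
      = ∫ ω, (‖u‖ ^ 2 + 2 * r * inner ℝ u (Y ω) + r ^ 2 * ‖Y ω‖ ^ 2) ∂μ := by
        congr 1 with ω
        rw [norm_add_sq_real, norm_smul, mul_pow, real_inner_smul_right, Real.norm_eq_abs, sq_abs,
          mul_assoc]
    _ = ‖u‖ ^ 2 + r ^ 2 * ∫ ω, ‖Y ω‖ ^ 2 ∂μ := by
        rw [integral_add ((integrable_const _).fun_add hinner) (hY₂.const_mul _),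
          integral_add (integrable_const _) hinner, integral_const_mul, integral_const_mul,
          integral_inner hY, centered, inner_zero_right, integral_const, probReal_univ, one_smul,
          mul_zero, add_zero]

section Homothety

variable {ι E : Type*} [Fintype ι] [NormedAddCommGroup E] [NormedSpace ℝ E]
  [MeasurableSpace E] [BorelSpace E] {w : ι → ℝ≥0} {v : ι → E} {r : ℝ}
  {μ : Measure E} [IsProbabilityMeasure μ]

theorem measurable_homothety (v : E) (r : ℝ) : Measurable (AffineMap.homothety v r) :=
  (AffineMap.homothety_continuous v r).measurable

namespace IsSelfSimilar

theorem exists_ae_norm_le (hμ : IsSelfSimilar w (fun i => AffineMap.homothety (v i) r) μ)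
    (hr₀ : 0 ≤ r) (hr : r < 1) : ∃ R, ∀ᵐ x ∂μ, ‖x‖ ≤ R := by
  obtain ⟨R, hR⟩ : ∃ R, ∀ i, ‖v i‖ ≤ R := Finite.bddAbove_range (fun i => ‖v i‖) |>.imp
    fun R hR i => hR ⟨i, rfl⟩
  have norm_homothety_le (i : ι) (x : E) :
      ‖AffineMap.homothety (v i) r x‖ ≤ (1 - r) * R + r * ‖x‖ :=
    calc ‖AffineMap.homothety (v i) r x‖ = ‖(1 - r) • v i + r • x‖ := by
          rw [AffineMap.homothety_eq_lineMap, AffineMap.lineMap_apply_module]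
      _ ≤ (1 - r) * ‖v i‖ + r * ‖x‖ := by
          refine (norm_add_le _ _).trans_eq ?_
          rw [norm_smul_of_nonneg (by linarith), norm_smul_of_nonneg hr₀]
      _ ≤ (1 - r) * R + r * ‖x‖ := by gcongr; exact hR i
  have excess_eq_zero : (fun x : E => max (‖x‖ - R) 0) =ᵐ[μ] 0 :=
    hμ.ae_eq_zero_of_comp_le (fun i => measurable_homothety (v i) r)
      (by fun_prop) (fun x => le_max_right _ _) hr fun i x => by
        rw [mul_max_of_nonneg _ _ hr₀, mul_zero]
        exact max_le_max_right 0 (by linarith [norm_homothety_le i x])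
  refine ⟨R, excess_eq_zero.mono fun x hx => ?_⟩
  exact sub_nonpos.1 (max_eq_right_iff.1 hx)

variable [ProperSpace E]

theorem integrable_of_continuous
    (hμ : IsSelfSimilar w (fun i => AffineMap.homothety (v i) r) μ) (hr₀ : 0 ≤ r) (hr : r < 1)
    {G : Type*} [NormedAddCommGroup G] {g : E → G} (hg : Continuous g) : Integrable g μ := by
  obtain ⟨R, hR⟩ := hμ.exists_ae_norm_le hr₀ hr
  obtain ⟨B, hB⟩ := (isCompact_closedBall (0 : E) R).exists_bound_of_continuousOn hg.continuousOn
  exact .of_bound hg.aestronglyMeasurable B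
    (hR.mono fun x hx => hB x (mem_closedBall_zero_iff.2 hx))

theorem integral_eq_sum_of_continuous {G : Type*} [NormedAddCommGroup G] [NormedSpace ℝ G]
    (hμ : IsSelfSimilar w (fun i => AffineMap.homothety (v i) r) μ) (hr₀ : 0 ≤ r) (hr : r < 1)
    {g : E → G} (hg : Continuous g) :
    ∫ x, g x ∂μ = ∑ i, w i • ∫ x, g (AffineMap.homothety (v i) r x) ∂μ :=
  hμ.integral_eq_sum (fun i => measurable_homothety (v i) r) hg.stronglyMeasurable
    (hμ.integrable_of_continuous hr₀ hr hg)

theorem integral_id (hμ : IsSelfSimilar w (fun i => AffineMap.homothety (v i) r) μ)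
    (hr₀ : 0 ≤ r) (hr : r < 1) : ∫ x, x ∂μ = ∑ i, w i • v i := by
  have hint : Integrable (fun x : E => x) μ := hμ.integrable_of_continuous hr₀ hr continuous_id
  have fixed : ∫ x, x ∂μ = (1 - r) • ∑ i, w i • v i + r • ∫ x, x ∂μ :=
    calc ∫ x, x ∂μ = ∑ i, w i • ∫ x, AffineMap.homothety (v i) r x ∂μ :=
          hμ.integral_eq_sum_of_continuous hr₀ hr continuous_id
      _ = ∑ i, w i • ((1 - r) • v i + r • ∫ x, x ∂μ) := by
          simp only [AffineMap.homothety_eq_lineMap, AffineMap.lineMap_apply_module,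
            integral_add (integrable_const _) (hint.fun_smul r), integral_const,
            integral_smul r (fun x : E => x), probReal_univ, one_smul]
      _ = (1 - r) • ∑ i, w i • v i + r • ∫ x, x ∂μ :=
          sum_nnreal_smul_smul_add_smul (hμ.sum_eq_one fun i => measurable_homothety (v i) r) ..
  refine smul_right_injective E (sub_pos.2 hr).ne' ?_
  simpa only [sub_smul (1 : ℝ) r (∫ x, x ∂μ), one_smul] using sub_eq_iff_eq_add.2 fixed

theorem sum_le_integral_of_concaveOn
    (hμ : IsSelfSimilar w (fun i => AffineMap.homothety (v i) r) μ) (hr₀ : 0 ≤ r) (hr : r < 1)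
    {g : E → ℝ} (hg : Continuous g) (hconc : ConcaveOn ℝ Set.univ g) :
    ∑ i, w i • g (v i) ≤ ∫ x, g x ∂μ := by
  have hint := hμ.integrable_of_continuous hr₀ hr hg
  have le_integral_comp (i : ι) :
      (1 - r) • g (v i) + r • ∫ x, g x ∂μ ≤ ∫ x, g (AffineMap.homothety (v i) r x) ∂μ :=
    calc (1 - r) • g (v i) + r • ∫ x, g x ∂μ = ∫ x, ((1 - r) • g (v i) + r • g x) ∂μ := by
          rw [integral_add (integrable_const _) (hint.fun_smul r), integral_const, integral_smul,
            probReal_univ, one_smul]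
      _ ≤ ∫ x, g (AffineMap.homothety (v i) r x) ∂μ := by
          refine integral_mono ((integrable_const _).add (hint.fun_smul r))
            (hμ.integrable_of_continuous hr₀ hr
              (hg.comp (AffineMap.homothety_continuous (v i) r))) fun x => ?_
          rw [AffineMap.homothety_eq_lineMap, AffineMap.lineMap_apply_module]
          exact hconc.2 trivial trivial (sub_nonneg.2 hr.le) hr₀ (sub_add_cancel 1 r)
  have averaged : (1 - r) • ∑ i, w i • g (v i) + r • ∫ x, g x ∂μ ≤ ∫ x, g x ∂μ :=
    calc (1 - r) • ∑ i, w i • g (v i) + r • ∫ x, g x ∂μ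
        = ∑ i, w i • ((1 - r) • g (v i) + r • ∫ x, g x ∂μ) :=
          (sum_nnreal_smul_smul_add_smul
            (hμ.sum_eq_one fun i => measurable_homothety (v i) r) ..).symm
      _ ≤ ∑ i, w i • ∫ x, g (AffineMap.homothety (v i) r x) ∂μ := by
          gcongr with i; exact le_integral_comp i
      _ = ∫ x, g x ∂μ := (hμ.integral_eq_sum_of_continuous hr₀ hr hg).symm
  simp only [smul_eq_mul] at averaged
  exact le_of_mul_le_mul_left (by linarith) (sub_pos.2 hr)

theorem sum_sum_le_integral_of_concaveOn
    (hμ : IsSelfSimilar w (fun i => AffineMap.homothety (v i) r) μ) (hr₀ : 0 ≤ r) (hr : r < 1)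
    {g : E → ℝ} (hg : Continuous g) (hconc : ConcaveOn ℝ Set.univ g) :
    ∑ i, w i • ∑ j, w j • g (AffineMap.homothety (v i) r (v j)) ≤ ∫ x, g x ∂μ :=
  calc ∑ i, w i • ∑ j, w j • g (AffineMap.homothety (v i) r (v j))
      ≤ ∑ i, w i • ∫ x, g (AffineMap.homothety (v i) r x) ∂μ := by
        gcongr with i
        exact hμ.sum_le_integral_of_concaveOn hr₀ hr
          (hg.comp (AffineMap.homothety_continuous (v i) r))
          (hconc.comp_affineMap (AffineMap.homothety (v i) r))
    _ = ∫ x, g x ∂μ := (hμ.integral_eq_sum_of_continuous hr₀ hr hg).symm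

end IsSelfSimilar

end Homothety

section InnerProduct

variable {ι E : Type*} [Fintype ι] [NormedAddCommGroup E] [InnerProductSpace ℝ E] [ProperSpace E]
  [MeasurableSpace E] [BorelSpace E] {w : ι → ℝ≥0} {v : ι → E} {r : ℝ}
  {μ : Measure E} [IsProbabilityMeasure μ]

namespace IsSelfSimilar

theorem integral_norm_sub_mean_sq
    (hμ : IsSelfSimilar w (fun i => AffineMap.homothety (v i) r) μ) (hr₀ : 0 ≤ r) (hr : r < 1) :
    (1 + r) * ∫ x, ‖x - ∫ y, y ∂μ‖ ^ 2 ∂μ = (1 - r) * ∑ i, w i • ‖v i - ∫ y, y ∂μ‖ ^ 2 := by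
  set m := ∫ y, y ∂μ with hm
  have hint : Integrable (fun x : E => x) μ := hμ.integrable_of_continuous hr₀ hr continuous_id
  have hcont : Continuous fun x : E => ‖x - m‖ ^ 2 := by fun_prop
  have centered : ∫ x, (x - m) ∂μ = 0 := by
    rw [integral_sub hint (integrable_const m), integral_const, probReal_univ, one_smul, ← hm,
      sub_self]
  have integral_comp (i : ι) : ∫ x, ‖AffineMap.homothety (v i) r x - m‖ ^ 2 ∂μ =
      (1 - r) ^ 2 • ‖v i - m‖ ^ 2 + r ^ 2 • ∫ x, ‖x - m‖ ^ 2 ∂μ :=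
    calc ∫ x, ‖AffineMap.homothety (v i) r x - m‖ ^ 2 ∂μ
        = ∫ x, ‖(1 - r) • (v i - m) + r • (x - m)‖ ^ 2 ∂μ := by
          congr 1 with x
          rw [AffineMap.homothety_eq_lineMap, AffineMap.lineMap_apply_module]
          congr 2
          module
      _ = (1 - r) ^ 2 • ‖v i - m‖ ^ 2 + r ^ 2 • ∫ x, ‖x - m‖ ^ 2 ∂μ := by
          rw [integral_norm_const_add_smul_sq (hint.sub' (integrable_const m))
            (hμ.integrable_of_continuous hr₀ hr hcont) centered, norm_smul, mul_pow,
            Real.norm_eq_abs, sq_abs, smul_eq_mul, smul_eq_mul]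
  have fixed : ∫ x, ‖x - m‖ ^ 2 ∂μ =
      (1 - r) ^ 2 • ∑ i, w i • ‖v i - m‖ ^ 2 + r ^ 2 • ∫ x, ‖x - m‖ ^ 2 ∂μ :=
    calc ∫ x, ‖x - m‖ ^ 2 ∂μ = ∑ i, w i • ∫ x, ‖AffineMap.homothety (v i) r x - m‖ ^ 2 ∂μ :=
          hμ.integral_eq_sum_of_continuous hr₀ hr hcont
      _ = (1 - r) ^ 2 • ∑ i, w i • ‖v i - m‖ ^ 2 + r ^ 2 • ∫ x, ‖x - m‖ ^ 2 ∂μ := by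
          simp only [integral_comp, sum_nnreal_smul_smul_add_smul
            (hμ.sum_eq_one fun i => measurable_homothety (v i) r)]
  simp only [smul_eq_mul] at fixed
  exact mul_left_cancel₀ (sub_pos.2 hr).ne' (by linear_combination fixed)

end IsSelfSimilar

end InnerProduct

section MinSqDist

variable {E : Type*} [NormedAddCommGroup E]

/-- The squared distance from `x` to the nearest point of the nonempty finite set `β`: the
distortion of the codebook `β` at `x`. -/
def minSqDist (β : Finset E) (hβ : β.Nonempty) (x : E) : ℝ :=
  β.inf' hβ fun c => ‖x - c‖ ^ 2

variable {β : Finset E} (hβ : β.Nonempty)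

theorem continuous_minSqDist : Continuous (minSqDist β hβ) :=
  Continuous.finset_inf'_apply hβ fun _ _ => by fun_prop

theorem minSqDist_le {c : E} (hc : c ∈ β) (x : E) : minSqDist β hβ x ≤ ‖x - c‖ ^ 2 :=
  Finset.inf'_le _ hc

theorem norm_sub_sq_sub_norm_sub_sq [InnerProductSpace ℝ E] (x c m : E) :
    ‖x - c‖ ^ 2 - ‖x - m‖ ^ 2 = 2 * inner ℝ x (m - c) + (‖c‖ ^ 2 - ‖m‖ ^ 2) := by
  rw [norm_sub_sq_real, norm_sub_sq_real, inner_sub_right]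
  ring

theorem concaveOn_minSqDist_sub_norm_sub_sq [InnerProductSpace ℝ E] (m : E) :
    ConcaveOn ℝ Set.univ fun x => minSqDist β hβ x - ‖x - m‖ ^ 2 := by
  refine ⟨convex_univ, fun x _ y _ a b ha hb hab => ?_⟩
  obtain ⟨c, hc, nearest⟩ := β.exists_mem_eq_inf' hβ fun c => ‖a • x + b • y - c‖ ^ 2
  calc a • (minSqDist β hβ x - ‖x - m‖ ^ 2) + b • (minSqDist β hβ y - ‖y - m‖ ^ 2)
      ≤ a • (‖x - c‖ ^ 2 - ‖x - m‖ ^ 2) + b • (‖y - c‖ ^ 2 - ‖y - m‖ ^ 2) := by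
        gcongr <;> exact minSqDist_le hβ hc _
    _ = ‖a • x + b • y - c‖ ^ 2 - ‖a • x + b • y - m‖ ^ 2 := by
        simp only [norm_sub_sq_sub_norm_sub_sq, inner_add_left, real_inner_smul_left, smul_eq_mul]
        linear_combination (‖c‖ ^ 2 - ‖m‖ ^ 2) * hab
    _ = minSqDist β hβ (a • x + b • y) - ‖a • x + b • y - m‖ ^ 2 := by rw [minSqDist, nearest]

end MinSqDist

theorem sum_le_card_mul_add_sum_mul_inf' {κ π : Type*} {s : Finset π} {β : Finset κ}
    (hβ : β.Nonempty) {price mass : π → ℝ} {cost : π → κ → ℝ} {L : ℝ}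
    (h : ∀ C ⊆ s, ∀ c ∈ β, ∑ p ∈ C, price p ≤ L + ∑ p ∈ C, mass p * cost p c) :
    ∑ p ∈ s, price p ≤ β.card * L + ∑ p ∈ s, mass p * β.inf' hβ (cost p) := by
  classical
  choose nearest nearest_mem nearest_eq using fun p => β.exists_mem_eq_inf' hβ (cost p)
  have fiberwise (g : π → ℝ) : ∑ c ∈ β, ∑ p ∈ s with nearest p = c, g p = ∑ p ∈ s, g p :=
    Finset.sum_fiberwise_of_maps_to (fun p _ => nearest_mem p) g
  calc ∑ p ∈ s, price p = ∑ c ∈ β, ∑ p ∈ s with nearest p = c, price p := (fiberwise price).symm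
    _ ≤ ∑ c ∈ β, (L + ∑ p ∈ s with nearest p = c, mass p * cost p c) :=
        Finset.sum_le_sum fun c hc => h _ (Finset.filter_subset _ _) c hc
    _ = β.card * L + ∑ c ∈ β, ∑ p ∈ s with nearest p = c, mass p * β.inf' hβ (cost p) := by
        rw [Finset.sum_add_distrib, Finset.sum_const, nsmul_eq_mul]
        congr 1
        refine Finset.sum_congr rfl fun c _ => Finset.sum_congr rfl fun p hp => ?_
        rw [nearest_eq, (Finset.mem_filter.1 hp).2]
    _ = β.card * L + ∑ p ∈ s, mass p * β.inf' hβ (cost p) := by rw [fiberwise]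

section IntegerMoments

theorem sum_le_sum_of_card_eq_of_threshold {ι : Type*} {A I : Finset ι} (hcard : A.card = I.card)
    {f : ι → ℝ} {τ : ℝ} (hI : ∀ i ∈ I, f i ≤ τ) (hIc : ∀ i ∉ I, τ ≤ f i) :
    ∑ i ∈ I, f i ≤ ∑ i ∈ A, f i := by
  classical
  have exchange : ∑ i ∈ I \ A, f i ≤ ∑ i ∈ A \ I, f i :=
    calc ∑ i ∈ I \ A, f i ≤ (I \ A).card • τ :=
          Finset.sum_le_card_nsmul _ _ _ fun i hi => hI i (Finset.mem_sdiff.1 hi).1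
      _ = (A \ I).card • τ := by rw [Finset.card_sdiff_comm hcard]
      _ ≤ ∑ i ∈ A \ I, f i :=
          Finset.card_nsmul_le_sum _ _ _ fun i hi => hIc i (Finset.mem_sdiff.1 hi).2
  linarith [Finset.sum_sdiff_sub_sum_sdiff (s₁ := I) (s₂ := A) (f := f)]

theorem sum_Ico_int_sub_sq (n : ℤ) (k : ℕ) (a : ℝ) :
    ∑ i ∈ Finset.Ico n (n + k), ((i : ℝ) - a) ^ 2 =
      k * ((k : ℝ) ^ 2 - 1) / 12 + k * (n + ((k : ℝ) - 1) / 2 - a) ^ 2 := by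
  induction k with
  | zero => simp
  | succ k ih =>
    rw [Nat.cast_succ, ← add_assoc, ← Finset.insert_Ico_right_eq_Ico_add_one (by lia),
      Finset.sum_insert Finset.right_notMem_Ico, ih]
    push_cast
    ring

theorem exists_int_le_sum_sub_sq (A : Finset ℤ) (a : ℝ) :
    ∃ n : ℤ, (A.card : ℝ) * ((A.card : ℝ) ^ 2 - 1) / 12 +
      A.card * (n + ((A.card : ℝ) - 1) / 2 - a) ^ 2 ≤ ∑ i ∈ A, ((i : ℝ) - a) ^ 2 := by
  set k := A.card
  set n := round (a - ((k : ℝ) - 1) / 2)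
  obtain ⟨near_le, near_ge⟩ := abs_le.1 (abs_sub_round (a - ((k : ℝ) - 1) / 2))
  refine ⟨n, ?_⟩
  rw [← sum_Ico_int_sub_sq]
  refine sum_le_sum_of_card_eq_of_threshold (τ := ((k : ℝ) / 2) ^ 2) (by simp [k])
    (fun i hi => ?_) fun i hi => ?_
  · obtain ⟨hi₁, hi₂⟩ := Finset.mem_Ico.1 hi
    have hi₁ : (n : ℝ) ≤ i := by exact_mod_cast hi₁
    have hi₂ : (i : ℝ) + 1 ≤ n + k := by exact_mod_cast hi₂
    exact sq_le_sq' (by linarith) (by linarith)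
  · have hi : i + 1 ≤ n ∨ n + k ≤ i := by rw [Finset.mem_Ico] at hi; lia
    rw [sq_le_sq, abs_of_nonneg (by positivity), le_abs']
    rcases hi with hi | hi
    · have hi : (i : ℝ) + 1 ≤ n := by exact_mod_cast hi
      exact .inl (by linarith)
    · have hi : (n : ℝ) + k ≤ i := by exact_mod_cast hi
      exact .inr (by linarith)

/-- The distance from `a` to the nearest mean of `k` consecutive integers: such means fill `ℤ` for
odd `k` and `ℤ + 1/2` for even `k`. -/
def distToMeans (k : ℕ) (a : ℝ) : ℝ :=
  if Even k then 1 / 2 - |a - round a| else |a - round a|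

theorem distToMeans_le (k : ℕ) (a : ℝ) (n : ℤ) :
    distToMeans k a ≤ |n + ((k : ℝ) - 1) / 2 - a| := by
  rw [distToMeans]
  split_ifs with hk
  · obtain ⟨l, rfl⟩ := hk
    have half_le : 1 / 2 ≤ |((n + l - round a : ℤ) : ℝ) - 1 / 2| := by
      rw [le_abs']
      rcases le_or_gt (n + l - round a) 0 with h | h
      · have h : ((n + l - round a : ℤ) : ℝ) ≤ 0 := by exact_mod_cast h
        exact .inl (by linarith)
      · have h : (1 : ℝ) ≤ ((n + l - round a : ℤ) : ℝ) := by exact_mod_cast h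
        exact .inr (by linarith)
    have triangle := abs_add_le (n + ((l + l : ℕ) - 1 : ℝ) / 2 - a) (a - round a)
    rw [show (n + ((l + l : ℕ) - 1 : ℝ) / 2 - a) + (a - round a) =
      ((n + l - round a : ℤ) : ℝ) - 1 / 2 by push_cast; ring] at triangle
    linarith
  · obtain ⟨l, rfl⟩ := Nat.not_even_iff_odd.1 hk
    rw [abs_sub_comm _ a,
      show (n : ℝ) + ((2 * l + 1 : ℕ) - 1) / 2 = (n + l : ℤ) by push_cast; ring]
    exact round_le a (n + l)

theorem distToMeans_nonneg (k : ℕ) (a : ℝ) : 0 ≤ distToMeans k a := by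
  rw [distToMeans]
  split_ifs
  exacts [sub_nonneg.2 (abs_sub_round a), abs_nonneg _]

theorem le_sum_int_sub_sq (A : Finset ℤ) (a : ℝ) :
    (A.card : ℝ) * ((A.card : ℝ) ^ 2 - 1) / 12 + A.card * distToMeans A.card a ^ 2 ≤
      ∑ i ∈ A, ((i : ℝ) - a) ^ 2 := by
  obtain ⟨n, hn⟩ := exists_int_le_sum_sub_sq A a
  refine le_trans ?_ hn
  rw [← sq_abs (n + _ - a)]
  gcongr
  exacts [distToMeans_nonneg _ a, distToMeans_le _ a n]

end IntegerMoments

section Rows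

variable {ι : Type*} [Fintype ι]

theorem sum_mul_sum_mul_sq_sub_sq_le (μ y : ι → ℝ) (b : ℝ) :
    (∑ j, μ j) * ∑ j, μ j * y j ^ 2 - (∑ j, μ j * y j) ^ 2 ≤
      (∑ j, μ j) * ∑ j, μ j * (y j - b) ^ 2 := by
  have expand : ∑ j, μ j * (y j - b) ^ 2 =
      ∑ j, μ j * y j ^ 2 - 2 * b * ∑ j, μ j * y j + b ^ 2 * ∑ j, μ j := by
    rw [Finset.mul_sum, Finset.mul_sum, ← Finset.sum_sub_distrib, ← Finset.sum_add_distrib]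
    exact Finset.sum_congr rfl fun j _ => by ring
  rw [expand]
  linarith [sq_nonneg ((∑ j, μ j) * b - ∑ j, μ j * y j)]

theorem even_mul_odd_div_four_le_sum_mul_distToMeans_sq (μ : ι → ℝ) (k : ι → ℕ) (a : ℝ) :
    (∑ j with Even (k j), μ j) * (∑ j with ¬ Even (k j), μ j) / 4 ≤
      (∑ j, μ j) * ∑ j, μ j * distToMeans (k j) a ^ 2 := by
  set t := |a - round a|
  set e := ∑ j with Even (k j), μ j
  set o := ∑ j with ¬ Even (k j), μ j
  have split_mass : ∑ j, μ j = e + o := (Finset.sum_filter_add_sum_filter_not ..).symm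
  have split_moment : ∑ j, μ j * distToMeans (k j) a ^ 2 = e * (1 / 2 - t) ^ 2 + o * t ^ 2 := by
    rw [← Finset.sum_filter_add_sum_filter_not _ (fun j => Even (k j)), Finset.sum_mul,
      Finset.sum_mul]
    congr 1 <;> refine Finset.sum_congr rfl fun j hj => ?_
    · rw [distToMeans, if_pos (Finset.mem_filter.1 hj).2]
    · rw [distToMeans, if_neg (Finset.mem_filter.1 hj).2]
  rw [split_mass, split_moment]
  linarith [sq_nonneg ((e + o) * t - e / 2)]

-- The bound is multiplied by the total mass so that no division occurs.
theorem le_mass_mul_distortion_of_rows {A : ι → Finset ℤ} {k : ι → ℕ} (hk : ∀ j, (A j).card = k j)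
    {m : ι → ℝ} (hm : ∀ j, 0 ≤ m j) (y : ι → ℝ) (a b : ℝ) :
    (∑ j, m j * k j) * (∑ j, m j * k j * y j ^ 2) - (∑ j, m j * k j * y j) ^ 2
        + (∑ j, m j * k j) * ∑ j, m j * k j * ((k j : ℝ) ^ 2 - 1) / 12
        + (∑ j with Even (k j), m j * k j) * (∑ j with ¬ Even (k j), m j * k j) / 4
      ≤ (∑ j, m j * k j) * ∑ j, ∑ i ∈ A j, m j * (((i : ℝ) - a) ^ 2 + (y j - b) ^ 2) := by
  have row_ge (j : ι) : m j * k j * ((k j : ℝ) ^ 2 - 1) / 12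
      + m j * k j * distToMeans (k j) a ^ 2 + m j * k j * (y j - b) ^ 2
      ≤ ∑ i ∈ A j, m j * (((i : ℝ) - a) ^ 2 + (y j - b) ^ 2) :=
    calc _ = m j * (k j * ((k j : ℝ) ^ 2 - 1) / 12 + k j * distToMeans (k j) a ^ 2)
          + m j * k j * (y j - b) ^ 2 := by ring
      _ ≤ m j * ∑ i ∈ A j, ((i : ℝ) - a) ^ 2 + m j * k j * (y j - b) ^ 2 := by
          gcongr; exacts [hm j, hk j ▸ le_sum_int_sub_sq (A j) a]
      _ = ∑ i ∈ A j, m j * (((i : ℝ) - a) ^ 2 + (y j - b) ^ 2) := by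
          simp only [mul_add, Finset.sum_add_distrib, Finset.sum_const, nsmul_eq_mul,
            Finset.mul_sum, hk]
          ring
  have horizontal := even_mul_odd_div_four_le_sum_mul_distToMeans_sq (fun j => m j * k j) k a
  have vertical := sum_mul_sum_mul_sq_sub_sq_le (fun j => m j * k j) y b
  have rows_ge := mul_le_mul_of_nonneg_left
    (Finset.sum_le_sum fun j (_ : j ∈ Finset.univ) => row_ge j)
    (Finset.sum_nonneg fun j (_ : j ∈ Finset.univ) => mul_nonneg (hm j) (Nat.cast_nonneg (k j)))
  simp only [Finset.sum_add_distrib] at rows_ge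
  linarith

end Rows

section Grid

/-- The masses of the points of the four rows of the grid `{0, 1, 2, 3}²`, bottom row first, in
units of `1/128`: a vertex `S_i (v_j)` of a first-level square carries the product of the weights of
`S_i` and `S_j`. -/
def rowMass : Fin 4 → ℕ
  | 0 => 2
  | 1 => 6
  | 2 => 6
  | 3 => 18

/-- The prices put on the points of the four rows of the grid: a dual solution of the four-centre
problem, of value `4 * (4 + 6 + 6 + 11) - 4 * 13 = 56`. -/
def rowPrice : Fin 4 → ℕ
  | 0 => 4
  | 1 => 6
  | 2 => 6
  | 3 => 11

-- `sum_rowPrice_le` for row counts `k`, after inserting `le_mass_mul_distortion_of_rows` and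
-- multiplying by `12 * ∑ j, rowMass j * k j`, with subtracted terms moved across.
theorem rowPrice_certificate {k : Fin 4 → ℕ} (hk : ∀ j, k j < 5) :
    12 * ((∑ j, rowMass j * k j) * (∑ j, rowPrice j * k j) + (∑ j, rowMass j * k j * j) ^ 2)
        + (∑ j, rowMass j * k j) ^ 2 ≤
      (∑ j, rowMass j * k j)
          * (12 * 13 + 12 * (∑ j, rowMass j * k j * j ^ 2) + ∑ j, rowMass j * k j ^ 3)
        + 3 * (∑ j with Even (k j), rowMass j * k j)
          * (∑ j with ¬ Even (k j), rowMass j * k j) := by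
  lift k to Fin 4 → Fin 5 using hk
  revert k
  decide +kernel

/-- The grid `{0, 1, 2, 3}²`. The second coordinate has type `Fin 4` because it indexes the rows;
the first is an integer so that rows are sets of integers. -/
def grid : Finset (ℤ × Fin 4) := Finset.Icc 0 3 ×ˢ Finset.univ

/-- The abscissae of the grid points of `C` in row `j`. -/
def row (C : Finset (ℤ × Fin 4)) (j : Fin 4) : Finset ℤ := {i ∈ Finset.Icc 0 3 | (i, j) ∈ C}

theorem card_row_lt (C : Finset (ℤ × Fin 4)) (j : Fin 4) : (row C j).card < 5 :=
  Nat.lt_succ_of_le (Finset.card_filter_le _ _)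

theorem sum_eq_sum_row {C : Finset (ℤ × Fin 4)} (hC : C ⊆ grid) (f : ℤ × Fin 4 → ℝ) :
    ∑ p ∈ C, f p = ∑ j, ∑ i ∈ row C j, f (i, j) :=
  Finset.sum_finset_product_right C Finset.univ (row C) fun _ =>
    ⟨fun hp => ⟨Finset.mem_univ _, Finset.mem_filter.2 ⟨(Finset.mem_product.1 (hC hp)).1, hp⟩⟩,
      fun hp => (Finset.mem_filter.1 hp.2).2⟩

theorem sum_snd_eq_sum_mul_card_row {C : Finset (ℤ × Fin 4)} (hC : C ⊆ grid) (f : Fin 4 → ℝ) :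
    ∑ p ∈ C, f p.2 = ∑ j, f j * (row C j).card := by
  simp only [sum_eq_sum_row hC, Finset.sum_const, nsmul_eq_mul, mul_comm]

theorem rowMass_pos : ∀ j, 0 < rowMass j := by decide

theorem sum_rowPrice_le {C : Finset (ℤ × Fin 4)} (hC : C ⊆ grid) (a b : ℝ) :
    ∑ p ∈ C, (rowPrice p.2 : ℝ) ≤
      13 + ∑ p ∈ C, rowMass p.2 * (((p.1 : ℝ) - a) ^ 2 + ((p.2 : ℝ) - b) ^ 2) := by
  rcases C.eq_empty_or_nonempty with rfl | hne
  · simp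
  set k : Fin 4 → ℕ := fun j => (row C j).card
  have mass_pos : 0 < ∑ j, (rowMass j : ℝ) * k j := by
    rw [← sum_snd_eq_sum_mul_card_row hC]
    exact Finset.sum_pos (fun _ _ => Nat.cast_pos.2 (rowMass_pos _)) hne
  have certificate := Nat.cast_le (α := ℝ).2 (rowPrice_certificate (card_row_lt C))
  push_cast at certificate
  have distortion := le_mass_mul_distortion_of_rows (A := row C) (k := k) (fun _ => rfl)
    (m := fun j => rowMass j) (fun j => Nat.cast_nonneg _) (fun j => (j : ℝ)) a b
  have third_moment : ∑ j, (rowMass j : ℝ) * k j * ((k j : ℝ) ^ 2 - 1) / 12 =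
      (∑ j, (rowMass j : ℝ) * k j ^ 3 - ∑ j, (rowMass j : ℝ) * k j) / 12 := by
    rw [← Finset.sum_sub_distrib, Finset.sum_div]
    exact Finset.sum_congr rfl fun j _ => by ring
  rw [third_moment] at distortion
  rw [sum_snd_eq_sum_mul_card_row hC fun j => (rowPrice j : ℝ), sum_eq_sum_row hC]
  refine le_of_mul_le_mul_left ?_ mass_pos
  linarith

end Grid

section SelfSimilarMinSqDist

variable {ι E : Type*} [Fintype ι] [NormedAddCommGroup E] [InnerProductSpace ℝ E] [ProperSpace E]
  [MeasurableSpace E] [BorelSpace E] {w : ι → ℝ≥0} {v : ι → E} {r : ℝ}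
  {μ : Measure E} [IsProbabilityMeasure μ] {β : Finset E} (hβ : β.Nonempty)

namespace IsSelfSimilar

theorem sum_sum_add_integral_le_integral_minSqDist
    (hμ : IsSelfSimilar w (fun i => AffineMap.homothety (v i) r) μ) (hr₀ : 0 ≤ r) (hr : r < 1)
    (m : E) :
    ∑ i, w i • ∑ j, w j • (minSqDist β hβ (AffineMap.homothety (v i) r (v j))
        - ‖AffineMap.homothety (v i) r (v j) - m‖ ^ 2) + ∫ x, ‖x - m‖ ^ 2 ∂μ ≤
      ∫ x, minSqDist β hβ x ∂μ := by
  have hφ := continuous_minSqDist hβ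
  have hsq : Continuous fun x : E => ‖x - m‖ ^ 2 := by fun_prop
  have jensen := hμ.sum_sum_le_integral_of_concaveOn hr₀ hr (hφ.fun_sub hsq)
    (concaveOn_minSqDist_sub_norm_sub_sq hβ m)
  rw [integral_sub (hμ.integrable_of_continuous hr₀ hr hφ)
    (hμ.integrable_of_continuous hr₀ hr hsq)] at jensen
  exact le_sub_iff_add_le.1 jensen

theorem integral_minSqDist_le
    (hμ : IsSelfSimilar w (fun i => AffineMap.homothety (v i) r) μ) (hr₀ : 0 ≤ r) (hr : r < 1)
    {m : E} (hm : ∀ i, AffineMap.homothety (v i) r m ∈ β) :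
    ∫ x, minSqDist β hβ x ∂μ ≤ r ^ 2 * ∫ x, ‖x - m‖ ^ 2 ∂μ := by
  have hφ := continuous_minSqDist hβ
  have hsq : Continuous fun x : E => ‖x - m‖ ^ 2 := by fun_prop
  have minSqDist_comp_le (i : ι) (x : E) :
      minSqDist β hβ (AffineMap.homothety (v i) r x) ≤ r ^ 2 * ‖x - m‖ ^ 2 := by
    refine (minSqDist_le hβ (hm i) _).trans_eq ?_
    rw [← vsub_eq_sub, ← AffineMap.linearMap_vsub, AffineMap.homothety_linear,
      LinearMap.smul_apply, LinearMap.id_apply, norm_smul, mul_pow, Real.norm_eq_abs, sq_abs,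
      vsub_eq_sub]
  calc ∫ x, minSqDist β hβ x ∂μ
      = ∑ i, w i • ∫ x, minSqDist β hβ (AffineMap.homothety (v i) r x) ∂μ :=
        hμ.integral_eq_sum_of_continuous hr₀ hr hφ
    _ ≤ ∑ i, w i • (r ^ 2 * ∫ x, ‖x - m‖ ^ 2 ∂μ) := by
        gcongr with i
        rw [← integral_const_mul]
        exact integral_mono (hμ.integrable_of_continuous hr₀ hr
          (hφ.comp (AffineMap.homothety_continuous (v i) r)))
          ((hμ.integrable_of_continuous hr₀ hr hsq).const_mul _) (minSqDist_comp_le i)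
    _ = r ^ 2 * ∫ x, ‖x - m‖ ^ 2 ∂μ := by
        rw [← Finset.sum_smul, hμ.sum_eq_one fun i => measurable_homothety (v i) r, one_smul]

end IsSelfSimilar

end SelfSimilarMinSqDist

section Carpet

theorem norm_sub_sq_eq (x c : E2) : ‖x - c‖ ^ 2 = (x 0 - c 0) ^ 2 + (x 1 - c 1) ^ 2 := by
  simp [EuclideanSpace.norm_sq_eq, Fin.sum_univ_two]

@[simp] theorem pt_apply_zero (a b : ℝ) : pt a b 0 = a := rfl

@[simp] theorem pt_apply_one (a b : ℝ) : pt a b 1 = b := rfl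

/-- The corners of the unit square, which are the fixed points of `S₁, …, S₄`. -/
def vertex : Fin 4 → E2
  | 0 => pt 0 0
  | 1 => pt 1 0
  | 2 => pt 0 1
  | 3 => pt 1 1

/-- The weights of `S₁, …, S₄` in the self-affinity equation. -/
def weight : Fin 4 → ℝ≥0
  | 0 => 1 / 8
  | 1 => 1 / 8
  | 2 => 3 / 8
  | 3 => 3 / 8

/-- The point of the plane with coordinates `p` in units of `1/3`. For `p ∈ grid` these are the
vertices `S_i (vertex j)` of the first-level squares. -/
def gridPoint (p : ℤ × Fin 4) : E2 := pt (p.1 / 3) (p.2 / 3)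

theorem S_eq_homothety (i : Fin 4) : S i = AffineMap.homothety (vertex i) (1 / 3 : ℝ) := by
  ext x k
  rw [AffineMap.homothety_eq_lineMap, AffineMap.lineMap_apply_module]
  fin_cases i <;> fin_cases k <;> norm_num [S, vertex] <;> ring

theorem carpetEq.isSelfSimilar {P : Measure E2} (hP : carpetEq P) :
    IsSelfSimilar weight (fun i => AffineMap.homothety (vertex i) (1 / 3 : ℝ)) P := by
  have coe_eighth : ((1 / 8 : ℝ≥0) : ℝ≥0∞) = 1 / 8 := by simp
  have coe_three_eighths : ((3 / 8 : ℝ≥0) : ℝ≥0∞) = 3 / 8 := by simp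
  rw [carpetEq, ← coe_eighth, ← coe_three_eighths] at hP
  simp only [IsSelfSimilar, ← S_eq_homothety, Fin.sum_univ_four]
  exact hP

theorem sum_weight_smul_vertex : ∑ i, weight i • vertex i = pt (1 / 2) (3 / 4) := by
  ext k
  fin_cases k <;> norm_num [Fin.sum_univ_four, weight, vertex, NNReal.smul_def]

theorem carpetEq.integral_norm_sub_sq {P : Measure E2} [IsProbabilityMeasure P]
    (hP : carpetEq P) : ∫ x, ‖x - pt (1 / 2) (3 / 4)‖ ^ 2 ∂P = 7 / 32 := by
  have mean := hP.isSelfSimilar.integral_id (by norm_num) (by norm_num)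
  have variance := hP.isSelfSimilar.integral_norm_sub_mean_sq (by norm_num) (by norm_num)
  rw [mean, sum_weight_smul_vertex] at variance
  have vertex_variance : ∑ i, weight i • ‖vertex i - pt (1 / 2) (3 / 4)‖ ^ 2 = (7 / 16 : ℝ) := by
    norm_num [Fin.sum_univ_four, weight, vertex, NNReal.smul_def, norm_sub_sq_eq]
  rw [vertex_variance] at variance
  linarith

theorem sum_grid_eq_sum_sum_weight (g : E2 → ℝ) :
    ∑ p ∈ grid, rowMass p.2 * g (gridPoint p) =
      128 * ∑ i, weight i • ∑ j, weight j • g (S i (vertex j)) := by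
  have Icc_eq : Finset.Icc (0 : ℤ) 3 = {0, 1, 2, 3} := by decide
  norm_num [grid, Finset.sum_product, Icc_eq, Fin.sum_univ_four, weight, vertex, rowMass, gridPoint,
    S, NNReal.smul_def]
  ring

theorem le_sum_grid_minSqDist {β : Finset E2} (hβ : β.Nonempty) (hcard : β.card ≤ 4) :
    56 ≤ ∑ p ∈ grid, 9 * rowMass p.2 * minSqDist β hβ (gridPoint p) := by
  have duality : ∑ p ∈ grid, (rowPrice p.2 : ℝ) ≤
      β.card * 13 + ∑ p ∈ grid, 9 * rowMass p.2 * minSqDist β hβ (gridPoint p) :=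
    sum_le_card_mul_add_sum_mul_inf' hβ fun C hC c _ => by
      refine (sum_rowPrice_le hC (3 * c 0) (3 * c 1)).trans_eq ?_
      congr 1
      refine Finset.sum_congr rfl fun p _ => ?_
      rw [norm_sub_sq_eq, gridPoint, pt_apply_zero, pt_apply_one]
      ring
  have total_price : ∑ p ∈ grid, (rowPrice p.2 : ℝ) = 108 := by
    exact_mod_cast (by decide : ∑ p ∈ grid, rowPrice p.2 = 108)
  have : (β.card : ℝ) ≤ 4 := by exact_mod_cast hcard
  linarith

theorem sum_sum_weight_smul_norm_sub_sq :
    ∑ i, weight i • ∑ j, weight j • ‖S i (vertex j) - pt (1 / 2) (3 / 4)‖ ^ 2 = (35 / 144 : ℝ) := by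
  norm_num [Fin.sum_univ_four, weight, vertex, S, NNReal.smul_def, norm_sub_sq_eq]

theorem carpetEq.le_integral_minSqDist {P : Measure E2} [IsProbabilityMeasure P] (hP : carpetEq P)
    {β : Finset E2} (hβ : β.Nonempty) (hcard : β.card ≤ 4) :
    7 / 288 ≤ ∫ x, minSqDist β hβ x ∂P := by
  have discretization := hP.isSelfSimilar.sum_sum_add_integral_le_integral_minSqDist hβ
    (by norm_num) (by norm_num) (pt (1 / 2) (3 / 4))
  simp only [← S_eq_homothety, smul_sub, Finset.sum_sub_distrib] at discretization
  rw [sum_sum_weight_smul_norm_sub_sq, hP.integral_norm_sub_sq] at discretization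
  have grid_ge := le_sum_grid_minSqDist hβ hcard
  simp only [mul_assoc, ← Finset.mul_sum] at grid_ge
  rw [sum_grid_eq_sum_sum_weight] at grid_ge
  linarith

/-- The centroids `a(1), …, a(4)` of the first-level squares. -/
def centroids : Finset E2 := Finset.univ.image fun i => S i (pt (1 / 2) (3 / 4))

theorem centroids_eq : centroids =
    {pt (1 / 6) (1 / 4), pt (5 / 6) (1 / 4), pt (1 / 6) (11 / 12), pt (5 / 6) (11 / 12)} := by
  have image_eq (f : Fin 4 → E2) : Finset.univ.image f = {f 0, f 1, f 2, f 3} := by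
    ext; simp [Fin.exists_fin_succ, eq_comm]
  rw [centroids, image_eq]
  norm_num [S]

theorem centroids_nonempty : centroids.Nonempty := Finset.univ_nonempty.image _

theorem card_centroids_le : centroids.card ≤ 4 := Finset.card_image_le

theorem minSqDist_centroids (x : E2) : minSqDist centroids centroids_nonempty x =
    min (min (‖x - pt (1 / 6) (1 / 4)‖ ^ 2) (‖x - pt (5 / 6) (1 / 4)‖ ^ 2))
      (min (‖x - pt (1 / 6) (11 / 12)‖ ^ 2) (‖x - pt (5 / 6) (11 / 12)‖ ^ 2)) := by
  simp [minSqDist, centroids_eq, min_assoc]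

theorem carpetEq.integral_minSqDist_centroids {P : Measure E2} [IsProbabilityMeasure P]
    (hP : carpetEq P) : ∫ x, minSqDist centroids centroids_nonempty x ∂P = 7 / 288 := by
  refine le_antisymm ?_ (hP.le_integral_minSqDist centroids_nonempty card_centroids_le)
  calc ∫ x, minSqDist centroids centroids_nonempty x ∂P
      ≤ (1 / 3) ^ 2 * ∫ x, ‖x - pt (1 / 2) (3 / 4)‖ ^ 2 ∂P :=
        hP.isSelfSimilar.integral_minSqDist_le centroids_nonempty (by norm_num) (by norm_num)
          fun i => by
            rw [← S_eq_homothety]; exact Finset.mem_image_of_mem _ (Finset.mem_univ i)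
    _ = 7 / 288 := by rw [hP.integral_norm_sub_sq]; norm_num

end Carpet

theorem optimal_four_means (P : Measure E2) [IsProbabilityMeasure P] (hP : carpetEq P) :
    (∫ x : E2, min (min (‖x - pt (1/6) (1/4)‖^2) (‖x - pt (5/6) (1/4)‖^2))
        (min (‖x - pt (1/6) (11/12)‖^2) (‖x - pt (5/6) (11/12)‖^2)) ∂P = 7/288)
    ∧ ∀ (β : Finset E2) (hβ : β.Nonempty), β.card ≤ 4 →
        7/288 ≤ ∫ x : E2, β.inf' hβ (fun c => ‖x - c‖^2) ∂P := by
  refine ⟨?_, fun β hβ hcard => hP.le_integral_minSqDist hβ hcard⟩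
  simp only [← minSqDist_centroids]
  exact hP.integral_minSqDist_centroids
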